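/- Let G be an antipodal distance-regular graph of diameter D which is an antipodal 2-cover. Then 0 is an eigenvalue of the distance matrix 𝔻₁ of G with multiplicity at least ⌊D/2⌋, and consequently 𝔻₁ has at most ⌈D/2⌉ + 2 distinct eigenvalues. -/

import Mathlib

open Matrix

variable {V : Type*} [Fintype V] [DecidableEq V]

/-- The distance-`i` matrix of a graph: the `(x,y)` entry is 1 if `dist x y = i`, else 0. -/
noncomputable def distM (G : SimpleGraph V) (i : ℕ) : Matrix V V ℝ :=
  Matrix.of fun x y => if G.dist x y = i then (1 : ℝ) else 0

/-- The `q`-distance matrix `𝔻_q = ∑_{i=1}^D (1 + 1/q + ⋯ + 1/q^{i-1}) • A_i`. -/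
noncomputable def qDist (G : SimpleGraph V) (D : ℕ) (q : ℝ) : Matrix V V ℝ :=
  ∑ i ∈ Finset.Icc 1 D, (∑ j ∈ Finset.range i, (1 / q) ^ j) • distM G i

/-- `G` is distance-regular with diameter `D` and intersection numbers `b i`, `c i`
(with `c 1 = 1`): for any vertices `x, y` at distance `i ≤ D`, the number of neighbors
of `y` at distance `i - 1` from `x` is `c i` and the number of neighbors of `y` at
distance `i + 1` from `x` is `b i`. -/
def IsDRG (G : SimpleGraph V) (D : ℕ) (b c : ℕ → ℕ) : Prop :=
  G.Connected ∧
  (∀ x y : V, G.dist x y ≤ D) ∧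
  (∃ x y : V, G.dist x y = D) ∧
  c 1 = 1 ∧
  ∀ i ≤ D, ∀ x y : V, G.dist x y = i →
    ({z : V | G.Adj y z ∧ G.dist x z = i - 1} : Set V).ncard = c i ∧
    ({z : V | G.Adj y z ∧ G.dist x z = i + 1} : Set V).ncard = b i

/-- `a i = k - b i - c i` as a real number, where `k = b 0`. -/
noncomputable def aInt (b c : ℕ → ℕ) (i : ℕ) : ℝ := (b 0 : ℝ) - (b i : ℝ) - (c i : ℝ)

/-- `G` is antipodal with diameter `D`: being equal or at distance `D` is an equivalence
relation on the vertices. -/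
def IsAntipodal (G : SimpleGraph V) (D : ℕ) : Prop :=
  ∀ u v w : V, G.dist u v = D → G.dist u w = D → (v = w ∨ G.dist v w = D)

/-- `G` is an antipodal `r`-cover with diameter `D`: every antipodal class has exactly `r`
elements. -/
def IsAntipodalCover (G : SimpleGraph V) (D r : ℕ) : Prop :=
  IsAntipodal G D ∧ ∀ x : V, ({y : V | y = x ∨ G.dist x y = D} : Set V).ncard = r

/-!
Write `P` for the antipodal matrix `A_D`. In an antipodal 2-cover every vertex `y` lies on a
geodesic between `x` and its antipode, so `A_i * P = A_{D-i}`; hence `P` is an involution of trace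
`0`, and `𝔻₁ * (1 + P) = D • J` with `J` the all-ones matrix. As `1 + P` has rank `n / 2` and `J`
has rank one, the kernel of `𝔻₁` has dimension at least `n / 2 - 1`, and `D < n`.

For the spectrum, `𝔻₁ * 𝔻₁ * (1 + P)` is a multiple of `J`, so `(X - D * n / 2) * X` kills `1 + P`
at `𝔻₁`. On the other half, `𝒜 * (1 - P)` (`𝒜` the Bose–Mesner algebra) is `𝔻₁`-invariant of
dimension at most `⌈D/2⌉`, so by Cayley–Hamilton a polynomial of degree at most `⌈D/2⌉` kills
`1 - P`. The product of the two polynomials annihilates `𝔻₁`.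
-/

open Polynomial

section LinearAlgebra

variable {K A n : Type*} [Field K]

lemma ncard_spectrum_le_natDegree [Ring A] [Algebra K A] {a : A} {p : K[X]} (hp : p ≠ 0)
    (ha : aeval a p = 0) : (spectrum K a).ncard ≤ p.natDegree := by
  have hsub : spectrum K a ⊆ p.rootSet K := by
    intro μ hμ
    have hev : eval μ p ∈ spectrum K (0 : A) :=
      ha ▸ spectrum.subset_polynomial_aeval a p ⟨μ, hμ, rfl⟩
    rw [mem_rootSet, coe_aeval_eq_eval]
    refine ⟨hp, by_contra fun hne => hev ?_⟩
    rw [spectrum.mem_resolventSet_iff, sub_zero]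
    exact (IsUnit.mk0 _ hne).map (algebraMap K A)
  exact (Set.ncard_le_ncard hsub (p.rootSet_finite K)).trans (p.ncard_rootSet_le K)

lemma exists_monic_aeval_mul_eq_zero [Ring A] [Algebra K A] (W : Submodule K A)
    [FiniteDimensional K W] {a : A} (ha : ∀ w ∈ W, a * w ∈ W) :
    ∃ p : K[X], p.Monic ∧ p.natDegree = Module.finrank K W ∧ ∀ w ∈ W, aeval a p * w = 0 := by
  let f : W →ₗ[K] W := (LinearMap.mulLeft K a).restrict ha
  have coe_aeval (p : K[X]) (w : W) : (aeval f p w : A) = aeval a p * w := by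
    induction p using Polynomial.induction_on' with
    | add p q hp hq => simp [hp, hq, add_mul]
    | monomial k r =>
      have coe_pow : ((f ^ k) w : A) = a ^ k * w := by
        induction k with
        | zero => simp
        | succ k ih => rw [pow_succ', Module.End.mul_apply, pow_succ', mul_assoc, ← ih]; rfl
      simp [aeval_monomial, coe_pow, Algebra.smul_def, mul_assoc]
  refine ⟨f.charpoly, f.charpoly_monic, f.charpoly_natDegree, fun w hw => ?_⟩
  rw [← coe_aeval f.charpoly ⟨w, hw⟩, f.aeval_self_charpoly]
  simp

lemma rank_le_rank_mul_add_finrank_ker [Fintype n] (M N : Matrix n n K) :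
    N.rank ≤ (M * N).rank + Module.finrank K (LinearMap.ker M.mulVecLin) := by
  let g := M.mulVecLin.domRestrict (LinearMap.range N.mulVecLin)
  have hrange : LinearMap.range g = LinearMap.range (M * N).mulVecLin := by
    rw [LinearMap.range_domRestrict, Matrix.mulVecLin_mul, LinearMap.range_comp]
  have hker : Module.finrank K (LinearMap.ker g) ≤
      Module.finrank K (LinearMap.ker M.mulVecLin) := by
    rw [LinearMap.ker_domRestrict, ← Submodule.finrank_map_subtype_eq, Submodule.map_comap_subtype]
    exact Submodule.finrank_mono inf_le_right
  calc N.rank = Module.finrank K (LinearMap.range g) + Module.finrank K (LinearMap.ker g) :=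
        g.finrank_range_add_finrank_ker.symm
    _ ≤ _ := by rw [hrange]; exact Nat.add_le_add_left hker _

lemma two_mul_rank_one_add_of_mul_self_eq_one [CharZero K] [Fintype n] [DecidableEq n]
    {P : Matrix n n K} (hP : P * P = 1) :
    2 * ((1 + P).rank : K) = Fintype.card n + P.trace := by
  let E : Matrix n n K := (2 : K)⁻¹ • (1 + P)
  have hE : E * E = E := by
    have hsq : (1 + P) * (1 + P) = (2 : K) • (1 + P) := by
      rw [mul_add, add_mul, add_mul, hP, two_smul]; noncomm_ring
    rw [Matrix.smul_mul, Matrix.mul_smul, hsq, inv_smul_smul₀ two_ne_zero]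
  have hproj : LinearMap.IsProj (LinearMap.range E.toLin') E.toLin' := by
    rw [LinearMap.isProj_range_iff_isIdempotentElem, IsIdempotentElem, Module.End.mul_eq_comp,
      ← Matrix.toLin'_mul, hE]
  have hrank : E.trace = (E.rank : K) := by
    rw [← Matrix.trace_toLin'_eq, hproj.trace]; rfl
  have hrankE : E.rank = (1 + P).rank :=
    Matrix.rank_smul_of_mem_nonZeroDivisors _ (mem_nonZeroDivisors_of_ne_zero (by norm_num))
  rw [← hrankE, ← hrank, Matrix.trace_smul, Matrix.trace_add, Matrix.trace_one]
  simp

end LinearAlgebra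

section Distance

variable {U : Type*} {G : SimpleGraph U} {D : ℕ}

lemma dist_lt_card [Fintype U] (hG : G.Connected) (u v : U) : G.dist u v < Fintype.card U := by
  obtain ⟨p, hp, hlen⟩ := hG.exists_path_of_dist u v
  exact hlen ▸ hp.length_lt

lemma exists_adj_dist_eq_of_lt_dist (hG : G.Connected) {u v : U} {i : ℕ} (hi : i < G.dist u v) :
    ∃ y z, G.Adj y z ∧ G.dist u y = i ∧ G.dist u z = i + 1 := by
  obtain ⟨p, hp⟩ := hG.exists_walk_length_eq_dist u v
  have dist_getVert (j : ℕ) (hj : j ≤ p.length) : G.dist u (p.getVert j) = j := by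
    rw [← SimpleGraph.length_eq_dist_of_subwalk hp (p.isSubwalk_take j)]
    simpa using hj
  exact ⟨p.getVert i, p.getVert (i + 1), p.adj_getVert_succ (by lia),
    dist_getVert i (by lia), dist_getVert (i + 1) (by lia)⟩

/-- The matrix with entries `f (d(x, y))`, i.e. `∑ i, f i • A_i`, as a linear function of `f`.
Values of `f` beyond the diameter are irrelevant. -/
noncomputable def matrixOfDist (G : SimpleGraph U) : (ℕ → ℝ) →ₗ[ℝ] Matrix U U ℝ where
  toFun f := Matrix.of fun x y => f (G.dist x y)
  map_add' _ _ := rfl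
  map_smul' _ _ := rfl

/-- The linear span of the distance matrices `A_i`; for a distance-regular graph this is the
Bose–Mesner algebra. -/
noncomputable def boseMesner (G : SimpleGraph U) : Submodule ℝ (Matrix U U ℝ) :=
  LinearMap.range (matrixOfDist G)

@[simp]
lemma matrixOfDist_apply (f : ℕ → ℝ) (x y : U) : matrixOfDist G f x y = f (G.dist x y) := rfl

lemma matrixOfDist_congr (hD : ∀ x y, G.dist x y ≤ D) {f g : ℕ → ℝ} (hfg : ∀ i ≤ D, f i = g i) :
    matrixOfDist G f = matrixOfDist G g := by
  ext x y
  exact hfg _ (hD x y)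

lemma distM_eq_matrixOfDist (i : ℕ) : distM G i = matrixOfDist G (Pi.single i 1) := by
  ext x y
  simp [distM, Pi.single_apply]

lemma distM_zero [DecidableEq U] (hG : G.Connected) : distM G 0 = 1 := by
  ext x y
  simp [distM, Matrix.one_apply, hG.dist_eq_zero_iff]

lemma trace_distM [Fintype U] {i : ℕ} (hi : i ≠ 0) : (distM G i).trace = 0 := by
  simp [Matrix.trace, distM, hi.symm]

lemma matrixOfDist_eq_sum (hD : ∀ x y, G.dist x y ≤ D) (f : ℕ → ℝ) :
    matrixOfDist G f = ∑ i ∈ Finset.range (D + 1), f i • distM G i := by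
  ext x y
  simp [Matrix.sum_apply, distM, hD x y]

lemma qDist_one_eq_matrixOfDist (hD : ∀ x y, G.dist x y ≤ D) :
    qDist G D 1 = matrixOfDist G (fun i => (i : ℝ)) := by
  rw [matrixOfDist_eq_sum hD, Finset.sum_range_eq_add_Ico _ D.succ_pos]
  simp [qDist, Finset.Ico_add_one_right_eq_Icc]

end Distance

section BoseMesner

variable {U : Type*} {G : SimpleGraph U} {D : ℕ} {b c : ℕ → ℕ}

/-- The tridiagonal intersection matrix of a distance-regular graph, acting on functions of the
distance. At `i = 0` the truncated index `i - 1` is harmless, as `c 0 = 0`. -/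
noncomputable def intersectionStep (b c : ℕ → ℕ) (f : ℕ → ℝ) (i : ℕ) : ℝ :=
  c i * f (i - 1) + aInt b c i * f i + b i * f (i + 1)

lemma apply_dist_of_adj (f : ℕ → ℝ) {x z : U} (hxz : G.Adj x z) (y : U) :
    f (G.dist z y) = f (G.dist x y) +
      (if G.dist z y = G.dist x y - 1 then f (G.dist x y - 1) - f (G.dist x y) else 0) +
      (if G.dist z y = G.dist x y + 1 then f (G.dist x y + 1) - f (G.dist x y) else 0) := by
  have htri := hxz.diff_dist_adj (u := y)
  rw [G.dist_comm (v := z), G.dist_comm (v := x)] at htri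
  grind

namespace IsDRG

lemma connected (hG : IsDRG G D b c) : G.Connected := hG.1

lemma dist_le (hG : IsDRG G D b c) (x y : U) : G.dist x y ≤ D := hG.2.1 x y

lemma exists_dist_eq_diam (hG : IsDRG G D b c) : ∃ x y, G.dist x y = D := hG.2.2.1

open scoped Classical in
lemma card_adj_dist_eq_sub_one [Fintype U] (hG : IsDRG G D b c) (x y : U) :
    Finset.card {z | G.Adj x z ∧ G.dist z y = G.dist x y - 1} = c (G.dist x y) := by
  rw [← (hG.2.2.2.2 _ (hG.dist_le x y) y x G.dist_comm).1, Set.ncard_eq_toFinset_card']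
  simp [G.dist_comm]

open scoped Classical in
lemma card_adj_dist_eq_add_one [Fintype U] (hG : IsDRG G D b c) (x y : U) :
    Finset.card {z | G.Adj x z ∧ G.dist z y = G.dist x y + 1} = b (G.dist x y) := by
  rw [← (hG.2.2.2.2 _ (hG.dist_le x y) y x G.dist_comm).2, Set.ncard_eq_toFinset_card']
  simp [G.dist_comm]

open scoped Classical in
lemma card_adj [Fintype U] (hG : IsDRG G D b c) (x : U) : Finset.card {z | G.Adj x z} = b 0 := by
  simpa [G.adj_comm] using hG.card_adj_dist_eq_add_one x x

lemma intersection_numbers_pos [Finite U] (hG : IsDRG G D b c) {i : ℕ} (hi : i < D) :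
    0 < b i ∧ 0 < c (i + 1) := by
  obtain ⟨u, v, huv⟩ := hG.exists_dist_eq_diam
  obtain ⟨y, z, hyz, hy, hz⟩ := exists_adj_dist_eq_of_lt_dist hG.connected (huv ▸ hi)
  have hbc := hG.2.2.2.2
  rw [← (hbc i hi.le u y hy).2, ← (hbc (i + 1) hi u z hz).1, Set.ncard_pos, Set.ncard_pos]
  exact ⟨⟨z, hyz, hz⟩, ⟨y, hyz.symm, hy⟩⟩

lemma distM_one_mul_matrixOfDist [Fintype U] (hG : IsDRG G D b c) (f : ℕ → ℝ) :
    distM G 1 * matrixOfDist G f = matrixOfDist G (intersectionStep b c f) := by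
  classical
  ext x y
  calc (distM G 1 * matrixOfDist G f) x y = ∑ z with G.Adj x z, f (G.dist z y) := by
        simp [Matrix.mul_apply, distM, Finset.sum_filter]
    _ = _ := Finset.sum_congr rfl fun z hz => apply_dist_of_adj f (Finset.mem_filter.mp hz).2 y
    _ = intersectionStep b c f (G.dist x y) := by
        simp only [Finset.sum_add_distrib, ← Finset.sum_filter, Finset.filter_filter,
          Finset.sum_const, nsmul_eq_mul, hG.card_adj, hG.card_adj_dist_eq_sub_one,
          hG.card_adj_dist_eq_add_one, intersectionStep, aInt]
        ring

lemma matrixOfDist_mem_adjoin_of_eq_zero [Fintype U] [DecidableEq U] (hG : IsDRG G D b c) {i : ℕ}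
    (hi : i ≤ D) {f : ℕ → ℝ} (hf : ∀ j ≤ D, i < j → f j = 0) :
    matrixOfDist G f ∈ Algebra.adjoin ℝ {distM G 1} := by
  induction i generalizing f with
  | zero =>
    have hf₀ : matrixOfDist G f = f 0 • 1 := by
      rw [← distM_zero hG.connected, distM_eq_matrixOfDist, ← map_smul]
      refine matrixOfDist_congr hG.dist_le fun j hj => ?_
      rcases j.eq_zero_or_pos with rfl | hpos
      · simp
      · simp [hf j hj hpos, hpos.ne']
    exact hf₀ ▸ Subalgebra.smul_mem _ (one_mem _) _
  | succ i ih =>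
    let t : ℕ → ℝ := intersectionStep b c (Pi.single i 1)
    have ht : matrixOfDist G t ∈ Algebra.adjoin ℝ {distM G 1} := by
      rw [← hG.distM_one_mul_matrixOfDist]
      refine mul_mem (Algebra.self_mem_adjoin_singleton ℝ _) (ih (by lia) fun j _ hj => ?_)
      simp [hj.ne']
    have hc : (c (i + 1) : ℝ) ≠ 0 := mod_cast (hG.intersection_numbers_pos hi).2.ne'
    let r : ℝ := f (i + 1) / c (i + 1)
    have hrest : matrixOfDist G (f - r • t) ∈ Algebra.adjoin ℝ {distM G 1} := by
      refine ih (by lia) fun j hjD hj => ?_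
      rcases (Nat.succ_le_of_lt hj).eq_or_lt with rfl | hlt
      · simp [t, r, intersectionStep, hc, show i + 1 + 1 ≠ i by lia]
      · simp [t, intersectionStep, hf j hjD hlt, show j - 1 ≠ i by lia,
          show j ≠ i by lia, show j + 1 ≠ i by lia]
    have hsplit : matrixOfDist G f = matrixOfDist G (f - r • t) + r • matrixOfDist G t := by
      rw [← map_smul, ← map_add, sub_add_cancel]
    exact hsplit ▸ add_mem hrest (Subalgebra.smul_mem _ ht _)

lemma matrixOfDist_mem_adjoin [Fintype U] [DecidableEq U] (hG : IsDRG G D b c) (f : ℕ → ℝ) :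
    matrixOfDist G f ∈ Algebra.adjoin ℝ {distM G 1} :=
  hG.matrixOfDist_mem_adjoin_of_eq_zero le_rfl fun _ hj hlt => absurd hj hlt.not_ge

lemma mul_mem_boseMesner [Fintype U] (hG : IsDRG G D b c) {M N : Matrix U U ℝ}
    (hM : M ∈ boseMesner G) (hN : N ∈ boseMesner G) : M * N ∈ boseMesner G := by
  classical
  have hM_adjoin : M ∈ Algebra.adjoin ℝ {distM G 1} := by
    obtain ⟨f, rfl⟩ := hM
    exact hG.matrixOfDist_mem_adjoin f
  clear hM
  induction hM_adjoin using Algebra.adjoin_induction generalizing N with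
  | mem A hA =>
    obtain ⟨g, rfl⟩ := hN
    exact ⟨_, (Set.mem_singleton_iff.mp hA ▸ hG.distM_one_mul_matrixOfDist g).symm⟩
  | algebraMap r => simpa [Algebra.algebraMap_eq_smul_one] using Submodule.smul_mem _ r hN
  | add A B _ _ hA hB => exact add_mul A B N ▸ add_mem (hA hN) (hB hN)
  | mul A B _ _ hA hB => exact (mul_assoc A B N).symm ▸ hA (hB hN)

end IsDRG

end BoseMesner

section AntipodalCover

variable {U : Type*} {G : SimpleGraph U} {D : ℕ} {b c : ℕ → ℕ}

lemma IsAntipodalCover.diam_pos (hcov : IsAntipodalCover G D 2) (hG : G.Connected) : 0 < D := by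
  obtain ⟨x⟩ := hG.nonempty
  refine Nat.pos_of_ne_zero fun hD => ?_
  have hclass : {y : U | y = x ∨ G.dist x y = D} = {x} := by
    ext y
    simp [hD, hG.dist_eq_zero_iff, eq_comm]
  simpa [hclass] using hcov.2 x

lemma IsAntipodalCover.existsUnique_dist_eq_diam [Finite U] (hcov : IsAntipodalCover G D 2)
    (hD : 0 < D) (x : U) : ∃! y, G.dist x y = D := by
  have hclass : {y : U | y = x ∨ G.dist x y = D} = insert x {y | G.dist x y = D} := rfl
  have hcard := hcov.2 x
  rw [hclass, Set.ncard_insert_of_notMem (by simp [hD.ne])] at hcard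
  obtain ⟨z, hz⟩ := Set.ncard_eq_one.mp (Nat.succ.inj hcard)
  have dist_eq_iff (y : U) : G.dist x y = D ↔ y = z := by simpa using Set.ext_iff.mp hz y
  exact ⟨z, (dist_eq_iff z).2 rfl, fun y => (dist_eq_iff y).1⟩

namespace IsDRG

-- A path from `x` to `y` can be prolonged to length `D`, where it ends at the only candidate `z`.
lemma dist_add_dist_of_dist_eq_diam [Finite U] (hG : IsDRG G D b c)
    (hcov : IsAntipodalCover G D 2) {x z : U} (hxz : G.dist x z = D) (y : U) :
    G.dist x y + G.dist y z = D := by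
  have hD := hcov.diam_pos hG.connected
  have dist_le_of_add (t : ℕ) : ∀ y, G.dist x y + t = D → G.dist y z ≤ t := by
    induction t with
    | zero =>
      intro y hy
      rw [(hcov.existsUnique_dist_eq_diam hD x).unique hy hxz, G.dist_self]
    | succ t ih =>
      intro y hy
      have hb := (hG.intersection_numbers_pos (i := G.dist x y) (by lia)).1
      rw [← (hG.2.2.2.2 _ (hG.dist_le x y) x y rfl).2, Set.ncard_pos] at hb
      obtain ⟨w, hyw, hw⟩ := hb
      have hwz := ih w (by lia)
      have htri := hG.connected.dist_triangle (u := y) (v := w) (w := z)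
      rw [SimpleGraph.dist_eq_one_iff_adj.mpr hyw] at htri
      lia
  have hle := dist_le_of_add (D - G.dist x y) y (by have := hG.dist_le x y; lia)
  have htri := hG.connected.dist_triangle (u := x) (v := y) (w := z)
  have := hG.dist_le x y
  lia

lemma matrixOfDist_mul_distM_diam [Fintype U] (hG : IsDRG G D b c)
    (hcov : IsAntipodalCover G D 2) (f : ℕ → ℝ) :
    matrixOfDist G f * distM G D = matrixOfDist G (fun i => f (D - i)) := by
  classical
  ext x y
  obtain ⟨z, hz, hunique⟩ := hcov.existsUnique_dist_eq_diam (hcov.diam_pos hG.connected) y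
  have eq_antipode (w : U) : G.dist w y = D ↔ w = z := by
    rw [G.dist_comm]
    exact ⟨hunique w, fun h => h ▸ hz⟩
  have hxz : G.dist x z = D - G.dist x y := by
    have := hG.dist_add_dist_of_dist_eq_diam hcov hz x
    rw [G.dist_comm (u := y)] at this
    lia
  simp [Matrix.mul_apply, distM, eq_antipode, hxz]

lemma distM_mul_distM_diam [Fintype U] (hG : IsDRG G D b c)
    (hcov : IsAntipodalCover G D 2) {i : ℕ} (hi : i ≤ D) :
    distM G i * distM G D = distM G (D - i) := by
  rw [distM_eq_matrixOfDist i, hG.matrixOfDist_mul_distM_diam hcov, distM_eq_matrixOfDist]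
  refine matrixOfDist_congr hG.dist_le fun j hj => ?_
  simp only [Pi.single_apply]
  exact if_congr (by lia) rfl rfl

lemma distM_diam_mulVec_one [Fintype U] (hG : IsDRG G D b c)
    (hcov : IsAntipodalCover G D 2) : distM G D *ᵥ 1 = 1 := by
  classical
  ext x
  obtain ⟨z, hz, hunique⟩ := hcov.existsUnique_dist_eq_diam (hcov.diam_pos hG.connected) x
  have eq_antipode (w : U) : G.dist x w = D ↔ w = z := ⟨hunique w, fun h => h ▸ hz⟩
  simp [Matrix.mulVec, dotProduct, distM, eq_antipode]

lemma qDist_mul_one_add_distM_diam [Fintype U] [DecidableEq U] (hG : IsDRG G D b c)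
    (hcov : IsAntipodalCover G D 2) :
    qDist G D 1 * (1 + distM G D) = vecMulVec (fun _ => (D : ℝ)) 1 := by
  rw [mul_add, mul_one, qDist_one_eq_matrixOfDist hG.dist_le, hG.matrixOfDist_mul_distM_diam hcov]
  ext x y
  simp [vecMulVec_apply, Nat.cast_sub (hG.dist_le x y)]

lemma qDist_mulVec_one [Fintype U] (hG : IsDRG G D b c)
    (hcov : IsAntipodalCover G D 2) : qDist G D 1 *ᵥ 1 = fun _ => (D * Fintype.card U / 2 : ℝ) := by
  classical
  have htwice : qDist G D 1 *ᵥ 1 + qDist G D 1 *ᵥ 1 = fun _ => (D * Fintype.card U : ℝ) := by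
    calc qDist G D 1 *ᵥ 1 + qDist G D 1 *ᵥ 1 = (qDist G D 1 * (1 + distM G D)) *ᵥ 1 := by
          rw [← mulVec_mulVec, add_mulVec, one_mulVec, hG.distM_diam_mulVec_one hcov, mulVec_add]
      _ = _ := by
          rw [hG.qDist_mul_one_add_distM_diam hcov, vecMulVec_mulVec]
          ext x
          simp [dotProduct]
  ext x
  have := congrFun htwice x
  simp only [Pi.add_apply] at this
  linarith

lemma card_le_two_mul_finrank_ker_qDist_add_two [Fintype U] (hG : IsDRG G D b c)
    (hcov : IsAntipodalCover G D 2) :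
    Fintype.card U ≤ 2 * Module.finrank ℝ (LinearMap.ker (qDist G D 1).mulVecLin) + 2 := by
  classical
  have hinvol : distM G D * distM G D = 1 := by
    rw [hG.distM_mul_distM_diam hcov le_rfl, Nat.sub_self, distM_zero hG.connected]
  have hsymm : 2 * (1 + distM G D).rank = Fintype.card U := by
    have := two_mul_rank_one_add_of_mul_self_eq_one hinvol
    rw [trace_distM (hcov.diam_pos hG.connected).ne', add_zero] at this
    exact_mod_cast this
  have hone : (qDist G D 1 * (1 + distM G D)).rank ≤ 1 :=
    hG.qDist_mul_one_add_distM_diam hcov ▸ rank_vecMulVec_le _ _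
  have := rank_le_rank_mul_add_finrank_ker (qDist G D 1) (1 + distM G D)
  lia

-- Spanned by `A_i - A_{D-i}`, which changes sign under `i ↦ D - i`: half of the indices suffice.
lemma finrank_boseMesner_map_mulRight_le [Fintype U] [DecidableEq U] (hG : IsDRG G D b c)
    (hcov : IsAntipodalCover G D 2) :
    Module.finrank ℝ ((boseMesner G).map (LinearMap.mulRight ℝ (1 - distM G D))) ≤
      (D + 1) / 2 := by
  let g : Fin ((D + 1) / 2) → Matrix U U ℝ := fun i => distM G i - distM G (D - i)
  have sub_mem_span (i : ℕ) (hi : i ≤ D) :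
      distM G i - distM G (D - i) ∈ Submodule.span ℝ (Set.range g) := by
    rcases lt_trichotomy i (D - i) with hlt | heq | hgt
    · exact Submodule.subset_span ⟨⟨i, by lia⟩, rfl⟩
    · simp [← heq]
    · rw [← neg_sub]
      refine Submodule.neg_mem _ (Submodule.subset_span ⟨⟨D - i, by lia⟩, ?_⟩)
      simp only [g, Nat.sub_sub_self hi]
  have hle : (boseMesner G).map (LinearMap.mulRight ℝ (1 - distM G D)) ≤
      Submodule.span ℝ (Set.range g) := by
    rintro _ ⟨_, ⟨f, rfl⟩, rfl⟩
    rw [LinearMap.mulRight_apply, matrixOfDist_eq_sum hG.dist_le, Finset.sum_mul]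
    refine Submodule.sum_mem _ fun i hi => ?_
    have hiD : i ≤ D := Finset.mem_range_succ_iff.mp hi
    rw [smul_mul_assoc, mul_sub, mul_one, hG.distM_mul_distM_diam hcov hiD]
    exact Submodule.smul_mem _ _ (sub_mem_span i hiD)
  simpa using (Submodule.finrank_mono hle).trans (finrank_range_le_card (R := ℝ) g)

lemma exists_monic_aeval_qDist_mul_one_sub_eq_zero [Fintype U] [DecidableEq U] (hG : IsDRG G D b c)
    (hcov : IsAntipodalCover G D 2) :
    ∃ p : ℝ[X], p.Monic ∧ p.natDegree ≤ (D + 1) / 2 ∧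
      aeval (qDist G D 1) p * (1 - distM G D) = 0 := by
  let S := (boseMesner G).map (LinearMap.mulRight ℝ (1 - distM G D))
  have hmem : qDist G D 1 ∈ boseMesner G := ⟨_, (qDist_one_eq_matrixOfDist hG.dist_le).symm⟩
  have hinv : ∀ N ∈ S, qDist G D 1 * N ∈ S := by
    rintro _ ⟨N, hN, rfl⟩
    exact ⟨qDist G D 1 * N, hG.mul_mem_boseMesner hmem hN, mul_assoc _ _ _⟩
  obtain ⟨p, hp, hdeg, hzero⟩ := exists_monic_aeval_mul_eq_zero S hinv
  have hone : (1 : Matrix U U ℝ) ∈ boseMesner G :=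
    ⟨_, (distM_eq_matrixOfDist 0).symm.trans (distM_zero hG.connected)⟩
  exact ⟨p, hp, hdeg ▸ hG.finrank_boseMesner_map_mulRight_le hcov, hzero _ ⟨1, hone, one_mul _⟩⟩

lemma aeval_qDist_mul_one_add_eq_zero [Fintype U] [DecidableEq U] (hG : IsDRG G D b c)
    (hcov : IsAntipodalCover G D 2) :
    aeval (qDist G D 1) ((X - C (D * Fintype.card U / 2 : ℝ)) * X) * (1 + distM G D) = 0 := by
  have hconst : (fun _ => (D : ℝ) : U → ℝ) = (D : ℝ) • 1 := by
    ext
    simp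
  rw [map_mul, aeval_X, mul_assoc, hG.qDist_mul_one_add_distM_diam hcov, mul_vecMulVec, hconst,
    mulVec_smul, map_sub, aeval_X, aeval_C, sub_mulVec, hG.qDist_mulVec_one hcov]
  ext x y
  simp [vecMulVec_apply, Algebra.algebraMap_eq_smul_one, smul_mulVec]

lemma exists_aeval_qDist_eq_zero [Fintype U] [DecidableEq U] (hG : IsDRG G D b c)
    (hcov : IsAntipodalCover G D 2) :
    ∃ p : ℝ[X], p ≠ 0 ∧ p.natDegree ≤ (D + 1) / 2 + 2 ∧ aeval (qDist G D 1) p = 0 := by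
  obtain ⟨p, hp, hdeg, hskew⟩ := hG.exists_monic_aeval_qDist_mul_one_sub_eq_zero hcov
  let q : ℝ[X] := (X - C (D * Fintype.card U / 2 : ℝ)) * X
  have hq : q.Monic := (monic_X_sub_C _).mul monic_X
  have hqdeg : q.natDegree = 2 := by
    rw [(monic_X_sub_C _).natDegree_mul monic_X, natDegree_X_sub_C, natDegree_X]
  have hsymm : aeval (qDist G D 1) q * (1 + distM G D) = 0 :=
    hG.aeval_qDist_mul_one_add_eq_zero hcov
  have htwice : (2 : ℝ) • aeval (qDist G D 1) (p * q) = 0 :=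
    calc (2 : ℝ) • aeval (qDist G D 1) (p * q)
        = aeval (qDist G D 1) (p * q) * (1 + distM G D) +
            aeval (qDist G D 1) (q * p) * (1 - distM G D) := by
          rw [mul_comm q p, ← mul_add, add_add_sub_cancel, two_smul, mul_add, mul_one]
      _ = 0 := by 
          rw [map_mul _ p q, map_mul _ q p, mul_assoc, mul_assoc, hsymm, hskew]
          simp
  refine ⟨p * q, (hp.mul hq).ne_zero, ?_, (smul_eq_zero_iff_right two_ne_zero).mp htwice⟩
  rw [hp.natDegree_mul hq, hqdeg]
  exact Nat.add_le_add_right hdeg 2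

end IsDRG

end AntipodalCover

/-- Proposition 4.2: for an antipodal distance-regular graph of diameter
`D` which is an antipodal 2-cover, `0` is an eigenvalue of the distance matrix `𝔻₁` with
multiplicity at least `⌊D/2⌋` (formulated via the dimension of the kernel), and hence `𝔻₁`
has at most `⌈D/2⌉ + 2` distinct eigenvalues. -/
theorem stmt18 (G : SimpleGraph V) (D : ℕ) (b c : ℕ → ℕ)
    (hG : IsDRG G D b c) (hcov : IsAntipodalCover G D 2) :
    D / 2 ≤ Module.finrank ℝ (LinearMap.ker (Matrix.mulVecLin (qDist G D 1))) ∧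
    (spectrum ℝ (qDist G D 1)).ncard ≤ (D + 1) / 2 + 2 := by
  constructor
  · obtain ⟨x, y, hxy⟩ := hG.exists_dist_eq_diam
    have hcard : D < Fintype.card V := hxy ▸ dist_lt_card hG.connected x y
    have hker := hG.card_le_two_mul_finrank_ker_qDist_add_two hcov
    lia
  · obtain ⟨p, hp, hdeg, hzero⟩ := hG.exists_aeval_qDist_eq_zero hcov
    exact (ncard_spectrum_le_natDegree hp hzero).trans hdeg
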